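/- For every rook partition α ∈ RP_n there exist unique (possibly empty) subsets P,Q ⊆ [n] and a unique partition β ∈ P_n such that α = ō_P β ō_Q, P is a block of β or P = ∅, and Q' is a block of β or Q = ∅. Moreover, if α lies in the singular part RP_n ∖ S_n, then β lies in P_n ∖ S_n. -/

import Mathlib

/-!
For arbitrary `P`, `Q`, `β`, collapsing the vertical edges of `ō_P` retracts `Γ(ō_P, β)` onto the
diagram of `β`. Hence multiplying by `ō_P` on the left just turns every block meeting `P` into
rook dots (`obarS_mul_rel`); dually for `ō_Q` on the right (`mul_obarS_rel`). If `P` and `Q'` are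
empty or blocks of `β`, then `ō_P β ō_Q` is therefore `β` with the points of `P ∪ Q'` turned into
rook dots (`obarS_mul_mul_obarS_rel`).

For `β` without rook dots, this forces `P` and `Q'` to be the sets of upper and lower rook dots of
the product, and `β` to be the product with each of these two sets added as a block
(`eq_fillDots_of_factorization`). Conversely this recipe, `fillDots`, gives a factorization
(`fillDots_factorization`). A permutation diagram has no block inside a single row, so
if `β` is a permutation then `P = Q = ∅` and `α = β` (`isPermDiag_of_fillDots`).
-/

namespace RookPaper

/-- Reflexive–symmetric–transitive closure of a relation
(connectivity by paths in a graph). -/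
inductive RClosure {V : Type*} (E : V → V → Prop) : V → V → Prop
  | base {x y : V} : E x y → RClosure E x y
  | refl (x : V) : RClosure E x x
  | symm {x y : V} : RClosure E x y → RClosure E y x
  | trans {x y z : V} : RClosure E x y → RClosure E y z → RClosure E x z

/-- The 2n points `1,…,n` (`Sum.inl`) and `1',…,n'` (`Sum.inr`). -/
abbrev Pt (n : ℕ) := Fin n ⊕ Fin n

/-- A rook partition of degree `n`, encoded as a partial equivalence relation on the
`2n` points: its blocks are the equivalence classes of `rel`, and the rook dots are the
points `x` with `¬ rel x x`. -/
structure RP (n : ℕ) where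
  rel : Pt n → Pt n → Prop
  symm : ∀ {x y : Pt n}, rel x y → rel y x
  trans : ∀ {x y z : Pt n}, rel x y → rel y z → rel x z

/-- The underlying index in `[n]` of a point (`i` and `i'` both have index `i`). -/
def idx {n : ℕ} : Pt n → Fin n := Sum.elim id id

/-- For `A ⊆ [n]`, the corresponding set of upper points. -/
def upSet {n : ℕ} (A : Set (Fin n)) : Set (Pt n) := Sum.inl '' A

/-- For `B ⊆ [n]`, the set `B' = {b' : b ∈ B}` of lower points. -/
def dnSet {n : ℕ} (B : Set (Fin n)) : Set (Pt n) := Sum.inr '' B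

/-- `x` is a rook dot of `α`. -/
def RP.IsRookDot {n : ℕ} (α : RP n) (x : Pt n) : Prop := ¬ α.rel x x

/-- `α` has no rook dots, i.e. `α` lies in the partition monoid `P_n`. -/
def RP.NoDots {n : ℕ} (α : RP n) : Prop := ∀ x, α.rel x x

/-- `B` is a block of `α`. -/
def RP.IsBlock {n : ℕ} (α : RP n) (B : Set (Pt n)) : Prop :=
  ∃ x, α.rel x x ∧ B = {y | α.rel x y}

/-- The identity rook partition, with blocks `{i,i'}`. -/
instance {n : ℕ} : One (RP n) :=
  ⟨{ rel := fun x y => idx x = idx y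
     symm := fun h => Eq.symm h
     trans := fun h h' => Eq.trans h h' }⟩

/-! The product graph `Γ(α,β)` lives on three rows of `n` vertices. -/

abbrev V3 (n : ℕ) := Fin n ⊕ Pt n

def vTop {n : ℕ} (i : Fin n) : V3 n := Sum.inl i
def vMid {n : ℕ} (i : Fin n) : V3 n := Sum.inr (Sum.inl i)
def vBot {n : ℕ} (i : Fin n) : V3 n := Sum.inr (Sum.inr i)

/-- `α` occupies the top and middle rows. -/
def embA {n : ℕ} : Pt n → V3 n := Sum.elim vTop vMid
/-- `β` occupies the middle and bottom rows. -/
def embB {n : ℕ} : Pt n → V3 n := Sum.elim vMid vBot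
/-- The product `αβ` lives on the top and bottom rows. -/
def embOut {n : ℕ} : Pt n → V3 n := Sum.elim vTop vBot

/-- The edges of the product graph `Γ(α,β)`. -/
def pgEdge {n : ℕ} (α β : RP n) (x y : V3 n) : Prop :=
  (∃ a b : Pt n, α.rel a b ∧ x = embA a ∧ y = embA b) ∨
  (∃ a b : Pt n, β.rel a b ∧ x = embB a ∧ y = embB b)

/-- Connectivity (by a possibly empty path) in the product graph `Γ(α,β)`. -/
def pgConn {n : ℕ} (α β : RP n) : V3 n → V3 n → Prop :=
  RClosure (pgEdge α β)

/-- The white vertices of `Γ(α,β)`: a top vertex is white if it is a rook dot of `α`,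
a bottom vertex is white if it is a rook dot of `β`, and a middle vertex is white if it is
a rook dot of `α` (as a lower point) or of `β` (as an upper point). -/
def pgWhite {n : ℕ} (α β : RP n) (v : V3 n) : Prop :=
  (∃ i, v = vTop i ∧ ¬ α.rel (Sum.inl i) (Sum.inl i)) ∨
  (∃ i, v = vMid i ∧ (¬ α.rel (Sum.inr i) (Sum.inr i) ∨ ¬ β.rel (Sum.inl i) (Sum.inl i))) ∨
  (∃ i, v = vBot i ∧ ¬ β.rel (Sum.inr i) (Sum.inr i))

/-- The product of two rook partitions: a point of `αβ` is a rook dot iff it is connected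
to a white vertex of `Γ(α,β)`, and two points are in the same block of `αβ` iff they are
connected in `Γ(α,β)` (and are not rook dots). -/
instance {n : ℕ} : Mul (RP n) :=
  ⟨fun α β =>
    { rel := fun x y =>
        pgConn α β (embOut x) (embOut y) ∧
          ∀ w, pgWhite α β w → ¬ pgConn α β (embOut x) w
      symm := by
        intro x y h
        exact ⟨RClosure.symm h.1, fun w hw hc => h.2 w hw (RClosure.trans h.1 hc)⟩
      trans := by
        intro x y z h h'
        exact ⟨RClosure.trans h.1 h'.1, h.2⟩ }⟩

/-- The rook partition corresponding to a permutation `σ`: blocks `{i, (σ i)'}`. -/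
def permRP {n : ℕ} (σ : Equiv.Perm (Fin n)) : RP n where
  rel x y := Sum.elim (fun i => σ i) (fun i => i) x = Sum.elim (fun i => σ i) (fun i => i) y
  symm := fun h => Eq.symm h
  trans := fun h h' => Eq.trans h h'

/-- `α` lies in the copy of the symmetric group `S_n` inside `RP_n`. -/
def RP.IsPermDiag {n : ℕ} (α : RP n) : Prop := ∃ σ : Equiv.Perm (Fin n), α = permRP σ

/-- The generator `ē_i` : blocks `{j,j'}` for `j ≠ i`, and singleton blocks `{i}`, `{i'}`. -/
def ebar {n : ℕ} (i : Fin n) : RP n where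
  rel x y := x = y ∨ (idx x = idx y ∧ idx x ≠ i)
  symm := by
    rintro x y (rfl | ⟨h1, h2⟩)
    · exact Or.inl rfl
    · exact Or.inr ⟨h1.symm, h1 ▸ h2⟩
  trans := by
    rintro x y z (rfl | ⟨h1, h2⟩) h
    · exact h
    · rcases h with rfl | ⟨h3, h4⟩
      · exact Or.inr ⟨h1, h2⟩
      · exact Or.inr ⟨h1.trans h3, h2⟩

/-- The generator `t̄_ij` (for `i ≠ j`): blocks `{k,k'}` for `k ∉ {i,j}`, and `{i,j,i',j'}`. -/
def tbar {n : ℕ} (i j : Fin n) : RP n where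
  rel x y := idx x = idx y ∨ ((idx x = i ∨ idx x = j) ∧ (idx y = i ∨ idx y = j))
  symm := by
    rintro x y (h | ⟨h1, h2⟩)
    · exact Or.inl h.symm
    · exact Or.inr ⟨h2, h1⟩
  trans := by
    rintro x y z hxy hyz
    rcases hxy with h | ⟨h1, h2⟩
    · rcases hyz with h' | ⟨h3, h4⟩
      · exact Or.inl (h.trans h')
      · refine Or.inr ⟨?_, h4⟩
        rw [h]; exact h3
    · rcases hyz with h' | ⟨h3, h4⟩
      · refine Or.inr ⟨h1, ?_⟩
        rw [← h']; exact h2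
      · exact Or.inr ⟨h1, h4⟩

/-- `ō_A` for a subset `A ⊆ [n]`: rook dots at all points of `A ∪ A'`, blocks `{j,j'}` for
`j ∉ A`. -/
def obarS {n : ℕ} (A : Set (Fin n)) : RP n where
  rel x y := idx x = idx y ∧ idx x ∉ A
  symm := by
    rintro x y ⟨h1, h2⟩
    exact ⟨h1.symm, h1 ▸ h2⟩
  trans := by
    rintro x y z ⟨h1, h2⟩ ⟨h3, h4⟩
    exact ⟨h1.trans h3, h2⟩

/-- The generator `ō_i`: rook dots `i` and `i'`, blocks `{j,j'}` for `j ≠ i`. -/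
def obar {n : ℕ} (i : Fin n) : RP n := obarS {i}

/-- For an index `i` of a simple transposition (`1 ≤ i ≤ n-1`, zero-based `Fin (n-1)`),
the smaller of the two swapped points. -/
def lo {n : ℕ} (i : Fin (n - 1)) : Fin n := ⟨i.val, by have := i.isLt; omega⟩
/-- The larger of the two swapped points. -/
def hi {n : ℕ} (i : Fin (n - 1)) : Fin n := ⟨i.val + 1, by have := i.isLt; omega⟩

/-- The generator `s̄_i`: the simple transposition with blocks `{i,(i+1)'}`, `{i+1,i'}`,
and `{j,j'}` for other `j`. -/
def sbar {n : ℕ} (i : Fin (n - 1)) : RP n := permRP (Equiv.swap (lo i) (hi i))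

/-- The generator `q̄_i = t̄_{i,i+1}`. -/
def qbar {n : ℕ} (i : Fin (n - 1)) : RP n := tbar (lo i) (hi i)

/-- Membership in the subsemigroup generated by a subset `X`. -/
inductive SgGen {M : Type*} [Mul M] (X : Set M) : M → Prop
  | incl {x : M} : x ∈ X → SgGen X x
  | mul {a b : M} : SgGen X a → SgGen X b → SgGen X (a * b)

/-- Membership in the submonoid generated by a subset `X`. -/
inductive MonGen {M : Type*} [Mul M] [One M] (X : Set M) : M → Prop
  | one : MonGen X 1
  | incl {x : M} : x ∈ X → MonGen X x
  | mul {a b : M} : MonGen X a → MonGen X b → MonGen X (a * b)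

/-- Evaluation of a word under a map on the letters (the product, in order, of the images
of the letters; the empty word evaluates to `1`). -/
def evalWord {X M : Type*} [Mul M] [One M] (f : X → M) : List X → M
  | [] => 1
  | [x] => f x
  | x :: y :: w => f x * evalWord f (y :: w)

/-- The congruence on the free monoid of words (with product = concatenation) generated
by a set of pairs `R`.  Restricted to nonempty words it is the congruence on the free
semigroup generated by `R`. -/
inductive CongGen {X : Type*} (R : List X → List X → Prop) : List X → List X → Prop
  | rel {u v : List X} : R u v → CongGen R u v
  | refl (u : List X) : CongGen R u u
  | symm {u v : List X} : CongGen R u v → CongGen R v u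
  | trans {u v w : List X} : CongGen R u v → CongGen R v w → CongGen R u w
  | mul {u v u' v' : List X} : CongGen R u v → CongGen R u' v' → CongGen R (u ++ u') (v ++ v')


/-! ### Products with `ō_A` -/

theorem RP.ext' {n : ℕ} {α β : RP n} (h : ∀ x y, α.rel x y ↔ β.rel x y) : α = β := by
  cases α
  cases β
  congr
  funext x y
  exact propext (h x y)

theorem RP.IsBlock.rel_iff {n : ℕ} {β : RP n} {B : Set (Pt n)} (hB : β.IsBlock B)
    {x b : Pt n} (hb : b ∈ B) : β.rel x b ↔ x ∈ B := by
  obtain ⟨z, -, rfl⟩ := hB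
  exact ⟨fun h => β.trans hb (β.symm h), fun h => β.trans (β.symm h) hb⟩

/-- The retraction of the product graph `Γ(ō_P, β)` onto the points of `β`, collapsing each
vertical edge `i — i'` of `ō_P`. -/
def retrL {n : ℕ} : V3 n → Pt n := Sum.elim Sum.inl id

/-- The retraction of the product graph `Γ(γ, ō_Q)` onto the points of `γ`, collapsing each
vertical edge `i — i'` of `ō_Q`. -/
def retrR {n : ℕ} : V3 n → Pt n := Sum.elim Sum.inl (Sum.elim Sum.inr Sum.inr)

/-- If a map `f` sends every edge to a loop or to a related pair of `β`, it does so for every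
path. -/
theorem RClosure.map_rel {V : Type*} {n : ℕ} {E : V → V → Prop} {β : RP n} (f : V → Pt n)
    (hf : ∀ u v, E u v → f u = f v ∨ β.rel (f u) (f v)) {u v : V} (h : RClosure E u v) :
    f u = f v ∨ β.rel (f u) (f v) := by
  induction h with
  | base h => exact hf _ _ h
  | refl => exact Or.inl rfl
  | symm _ ih => exact ih.imp Eq.symm β.symm
  | trans _ _ ih₁ ih₂ =>
    rcases ih₁ with h₁ | h₁
    · rwa [h₁]
    · rcases ih₂ with h₂ | h₂
      · exact Or.inr (h₂ ▸ h₁)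
      · exact Or.inr (β.trans h₁ h₂)

/-- Left multiplication by `ō_P` turns into rook dots exactly the points whose block meets
`P`, and changes nothing else. -/
theorem obarS_mul_rel {n : ℕ} (P : Set (Fin n)) (β : RP n) (x y : Pt n) :
    (obarS P * β).rel x y ↔ β.rel x y ∧ ∀ p ∈ P, ¬ β.rel x (Sum.inl p) := by
  have hmap : ∀ {u v}, pgConn (obarS P) β u v →
      retrL u = retrL v ∨ β.rel (retrL u) (retrL v) := by
    refine RClosure.map_rel retrL ?_
    rintro _ _ (⟨a, b, ⟨h, -⟩, rfl, rfl⟩ | ⟨a, b, h, rfl, rfl⟩)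
    · left
      rcases a with a | a <;> rcases b with b | b <;> exact congrArg Sum.inl h
    · right
      rcases a with a | a <;> rcases b with b | b <;> exact h
  have hout : ∀ z : Pt n, retrL (embOut z) = z := by rintro (z | z) <;> rfl
  have hβ : ∀ {a b}, β.rel a b → pgConn (obarS P) β (embB a) (embB b) := fun {a b} h =>
    RClosure.base (Or.inr ⟨a, b, h, rfl, rfl⟩)
  -- A point outside `P` reaches its own copy among the points of `β`.
  have hup : ∀ z : Pt n, (∀ p ∈ P, z ≠ Sum.inl p) →
      pgConn (obarS P) β (embOut z) (embB z) := by
    rintro (i | i) hz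
    · exact RClosure.base (Or.inl ⟨Sum.inl i, Sum.inr i,
        ⟨rfl, fun h => hz i h rfl⟩, rfl, rfl⟩)
    · exact RClosure.refl _
  constructor
  · rintro ⟨hc, hw⟩
    have hxP : ∀ p ∈ P, x ≠ Sum.inl p := by
      rintro p hp rfl
      exact hw (vTop p) (Or.inl ⟨p, rfl, fun h => h.2 hp⟩) (RClosure.refl _)
    have hxx : β.rel x x := by
      by_contra hn
      refine hw (embB x) ?_ (hup x hxP)
      rcases x with i | i
      · exact Or.inr (Or.inl ⟨i, rfl, Or.inr hn⟩)
      · exact Or.inr (Or.inr ⟨i, rfl, hn⟩)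
    refine ⟨?_, fun p hp h => ?_⟩
    · have := hmap hc
      rw [hout, hout] at this
      exact this.elim (fun h => h ▸ hxx) id
    · exact hw (vMid p) (Or.inr (Or.inl ⟨p, rfl, Or.inl fun h => h.2 hp⟩))
        (RClosure.trans (hup x hxP) (hβ h))
  · rintro ⟨h, hP⟩
    have hxx := β.trans h (β.symm h)
    have key : ∀ z, β.rel x z → pgConn (obarS P) β (embOut z) (embB z) := fun z hz =>
      hup z fun p hp e => hP p hp (e ▸ hz)
    refine ⟨RClosure.trans (key x hxx) (RClosure.trans (hβ h) (RClosure.symm (key y h))),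
      fun w hw hc => ?_⟩
    have hr : β.rel x (retrL w) := by
      have := hmap hc
      rw [hout] at this
      exact this.elim (fun h => h ▸ hxx) id
    have hrr := β.trans (β.symm hr) hr
    rcases hw with ⟨i, rfl, hi⟩ | ⟨i, rfl, hi | hi⟩ | ⟨i, rfl, hi⟩
    · exact hi ⟨rfl, fun hp => hP i hp hr⟩
    · exact hi ⟨rfl, fun hp => hP i hp hr⟩
    · exact hi hrr
    · exact hi hrr

/-- Right multiplication by `ō_Q` turns into rook dots exactly the points whose block meets
`Q'`, and changes nothing else. -/
theorem mul_obarS_rel {n : ℕ} (Q : Set (Fin n)) (γ : RP n) (x y : Pt n) :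
    (γ * obarS Q).rel x y ↔ γ.rel x y ∧ ∀ q ∈ Q, ¬ γ.rel x (Sum.inr q) := by
  have hmap : ∀ {u v}, pgConn γ (obarS Q) u v →
      retrR u = retrR v ∨ γ.rel (retrR u) (retrR v) := by
    refine RClosure.map_rel retrR ?_
    rintro _ _ (⟨a, b, h, rfl, rfl⟩ | ⟨a, b, ⟨h, -⟩, rfl, rfl⟩)
    · right
      rcases a with a | a <;> rcases b with b | b <;> exact h
    · left
      rcases a with a | a <;> rcases b with b | b <;> exact congrArg Sum.inr h
  have hout : ∀ z : Pt n, retrR (embOut z) = z := by rintro (z | z) <;> rfl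
  have hγ : ∀ {a b}, γ.rel a b → pgConn γ (obarS Q) (embA a) (embA b) := fun {a b} h =>
    RClosure.base (Or.inl ⟨a, b, h, rfl, rfl⟩)
  -- A point outside `Q'` reaches its own copy among the points of `γ`.
  have hdn : ∀ z : Pt n, (∀ q ∈ Q, z ≠ Sum.inr q) →
      pgConn γ (obarS Q) (embOut z) (embA z) := by
    rintro (i | i) hz
    · exact RClosure.refl _
    · exact RClosure.base (Or.inr ⟨Sum.inr i, Sum.inl i,
        ⟨rfl, fun h => hz i h rfl⟩, rfl, rfl⟩)
  constructor
  · rintro ⟨hc, hw⟩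
    have hxQ : ∀ q ∈ Q, x ≠ Sum.inr q := by
      rintro q hq rfl
      exact hw (vBot q) (Or.inr (Or.inr ⟨q, rfl, fun h => h.2 hq⟩)) (RClosure.refl _)
    have hxx : γ.rel x x := by
      by_contra hn
      refine hw (embA x) ?_ (hdn x hxQ)
      rcases x with i | i
      · exact Or.inl ⟨i, rfl, hn⟩
      · exact Or.inr (Or.inl ⟨i, rfl, Or.inl hn⟩)
    refine ⟨?_, fun q hq h => ?_⟩
    · have := hmap hc
      rw [hout, hout] at this
      exact this.elim (fun h => h ▸ hxx) id
    · exact hw (vMid q) (Or.inr (Or.inl ⟨q, rfl, Or.inr fun h => h.2 hq⟩))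
        (RClosure.trans (hdn x hxQ) (hγ h))
  · rintro ⟨h, hQ⟩
    have hxx := γ.trans h (γ.symm h)
    have key : ∀ z, γ.rel x z → pgConn γ (obarS Q) (embOut z) (embA z) := fun z hz =>
      hdn z fun q hq e => hQ q hq (e ▸ hz)
    refine ⟨RClosure.trans (key x hxx) (RClosure.trans (hγ h) (RClosure.symm (key y h))),
      fun w hw hc => ?_⟩
    have hr : γ.rel x (retrR w) := by
      have := hmap hc
      rw [hout] at this
      exact this.elim (fun h => h ▸ hxx) id
    have hrr := γ.trans (γ.symm hr) hr
    rcases hw with ⟨i, rfl, hi⟩ | ⟨i, rfl, hi | hi⟩ | ⟨i, rfl, hi⟩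
    · exact hi hrr
    · exact hi hrr
    · exact hi ⟨rfl, fun hq => hQ i hq hr⟩
    · exact hi ⟨rfl, fun hq => hQ i hq hr⟩

/-- When `P` and `Q'` are empty or blocks of `β`, the product `ō_P β ō_Q` is `β` with the
points of `P ∪ Q'` replaced by rook dots. -/
theorem obarS_mul_mul_obarS_rel {n : ℕ} {P Q : Set (Fin n)} {β : RP n}
    (hP : P = ∅ ∨ β.IsBlock (upSet P)) (hQ : Q = ∅ ∨ β.IsBlock (dnSet Q)) (x y : Pt n) :
    (obarS P * β * obarS Q).rel x y ↔ β.rel x y ∧ x ∉ upSet P ∧ x ∉ dnSet Q := by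
  have hxP : β.rel x x → ((∀ p ∈ P, ¬ β.rel x (Sum.inl p)) ↔ x ∉ upSet P) := by
    intro hx
    constructor
    · rintro h ⟨p, hp, rfl⟩
      exact h p hp hx
    · intro h p hp hr
      rcases hP with rfl | hP
      · exact hp
      · exact h ((hP.rel_iff (Set.mem_image_of_mem _ hp)).1 hr)
  have hxQ : β.rel x x → ((∀ q ∈ Q, ¬ β.rel x (Sum.inr q)) ↔ x ∉ dnSet Q) := by
    intro hx
    constructor
    · rintro h ⟨q, hq, rfl⟩
      exact h q hq hx
    · intro h q hq hr
      rcases hQ with rfl | hQ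
      · exact hq
      · exact h ((hQ.rel_iff (Set.mem_image_of_mem _ hq)).1 hr)
  rw [mul_obarS_rel]
  simp only [obarS_mul_rel]
  constructor
  · rintro ⟨⟨h, h₁⟩, h₂⟩
    have hx := β.trans h (β.symm h)
    exact ⟨h, (hxP hx).1 h₁, (hxQ hx).1 fun q hq hr => h₂ q hq ⟨hr, h₁⟩⟩
  · rintro ⟨h, h₁, h₂⟩
    have hx := β.trans h (β.symm h)
    exact ⟨⟨h, (hxP hx).2 h₁⟩, fun q hq hr => (hxQ hx).2 h₂ q hq hr.1⟩

/-! ### Filling the rook dots -/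

theorem inl_mem_upSet {n : ℕ} {A : Set (Fin n)} {i : Fin n} :
    (Sum.inl i : Pt n) ∈ upSet A ↔ i ∈ A := by simp [upSet]

theorem inr_mem_dnSet {n : ℕ} {A : Set (Fin n)} {i : Fin n} :
    (Sum.inr i : Pt n) ∈ dnSet A ↔ i ∈ A := by simp [dnSet]

theorem inr_notMem_upSet {n : ℕ} {A : Set (Fin n)} {i : Fin n} :
    (Sum.inr i : Pt n) ∉ upSet A := by simp [upSet]

theorem inl_notMem_dnSet {n : ℕ} {A : Set (Fin n)} {i : Fin n} :
    (Sum.inl i : Pt n) ∉ dnSet A := by simp [dnSet]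

/-- The index set of the upper rook dots of `α`. -/
def upDots {n : ℕ} (α : RP n) : Set (Fin n) := {i | ¬ α.rel (Sum.inl i) (Sum.inl i)}

/-- The index set of the lower rook dots of `α`. -/
def dnDots {n : ℕ} (α : RP n) : Set (Fin n) := {i | ¬ α.rel (Sum.inr i) (Sum.inr i)}

theorem not_rel_of_mem_upSet {n : ℕ} {α : RP n} {x y : Pt n} (hx : x ∈ upSet (upDots α)) :
    ¬ α.rel x y := by
  obtain ⟨i, hi, rfl⟩ := hx
  exact fun h => hi (α.trans h (α.symm h))

theorem not_rel_of_mem_dnSet {n : ℕ} {α : RP n} {x y : Pt n} (hx : x ∈ dnSet (dnDots α)) :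
    ¬ α.rel x y := by
  obtain ⟨i, hi, rfl⟩ := hx
  exact fun h => hi (α.trans h (α.symm h))

theorem notMem_upSet_of_mem_dnSet {n : ℕ} {A B : Set (Fin n)} {x : Pt n}
    (hx : x ∈ dnSet B) : x ∉ upSet A := by
  obtain ⟨i, -, rfl⟩ := hx
  exact inr_notMem_upSet

/-- The partition obtained from `α` by gathering the upper rook dots into one block and the
lower rook dots into another. -/
def fillDots {n : ℕ} (α : RP n) : RP n where
  rel x y := α.rel x y ∨ (x ∈ upSet (upDots α) ∧ y ∈ upSet (upDots α)) ∨
    (x ∈ dnSet (dnDots α) ∧ y ∈ dnSet (dnDots α))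
  symm := by
    rintro x y (h | h | h)
    · exact Or.inl (α.symm h)
    · exact Or.inr (Or.inl h.symm)
    · exact Or.inr (Or.inr h.symm)
  trans := by
    rintro x y z (h | h | h) (k | k | k)
    · exact Or.inl (α.trans h k)
    · exact (not_rel_of_mem_upSet k.1 (α.symm h)).elim
    · exact (not_rel_of_mem_dnSet k.1 (α.symm h)).elim
    · exact (not_rel_of_mem_upSet h.2 k).elim
    · exact Or.inr (Or.inl ⟨h.1, k.2⟩)
    · exact (notMem_upSet_of_mem_dnSet k.1 h.2).elim
    · exact (not_rel_of_mem_dnSet h.2 k).elim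
    · exact (notMem_upSet_of_mem_dnSet h.2 k.1).elim
    · exact Or.inr (Or.inr ⟨h.1, k.2⟩)

theorem fillDots_noDots {n : ℕ} (α : RP n) : (fillDots α).NoDots := by
  intro x
  by_cases h : α.rel x x
  · exact Or.inl h
  · rcases x with i | i
    · exact Or.inr (Or.inl ⟨⟨i, h, rfl⟩, ⟨i, h, rfl⟩⟩)
    · exact Or.inr (Or.inr ⟨⟨i, h, rfl⟩, ⟨i, h, rfl⟩⟩)

theorem fillDots_upSet {n : ℕ} (α : RP n) :
    upDots α = ∅ ∨ (fillDots α).IsBlock (upSet (upDots α)) := by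
  refine (Set.eq_empty_or_nonempty _).imp_right ?_
  rintro ⟨i, hi⟩
  refine ⟨Sum.inl i, fillDots_noDots α _, Set.ext fun y => ⟨fun hy => ?_, ?_⟩⟩
  · exact Or.inr (Or.inl ⟨⟨i, hi, rfl⟩, hy⟩)
  · rintro (h | h | h)
    · exact (not_rel_of_mem_upSet ⟨i, hi, rfl⟩ h).elim
    · exact h.2
    · exact (inl_notMem_dnSet h.1).elim

theorem fillDots_dnSet {n : ℕ} (α : RP n) :
    dnDots α = ∅ ∨ (fillDots α).IsBlock (dnSet (dnDots α)) := by
  refine (Set.eq_empty_or_nonempty _).imp_right ?_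
  rintro ⟨i, hi⟩
  refine ⟨Sum.inr i, fillDots_noDots α _, Set.ext fun y => ⟨fun hy => ?_, ?_⟩⟩
  · exact Or.inr (Or.inr ⟨⟨i, hi, rfl⟩, hy⟩)
  · rintro (h | h | h)
    · exact (not_rel_of_mem_dnSet ⟨i, hi, rfl⟩ h).elim
    · exact (inr_notMem_upSet h.1).elim
    · exact h.2

theorem fillDots_factorization {n : ℕ} (α : RP n) :
    α = obarS (upDots α) * fillDots α * obarS (dnDots α) := by
  refine RP.ext' fun x y => ?_
  rw [obarS_mul_mul_obarS_rel (fillDots_upSet α) (fillDots_dnSet α)]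
  constructor
  · exact fun h => ⟨Or.inl h, fun hx => not_rel_of_mem_upSet hx h,
      fun hx => not_rel_of_mem_dnSet hx h⟩
  · rintro ⟨h | h | h, h₁, h₂⟩
    · exact h
    · exact (h₁ h.1).elim
    · exact (h₂ h.1).elim

/-! ### Uniqueness and permutation diagrams -/

/-- Every factorization in normal form is the one given by the rook dots of `α`. -/
theorem eq_fillDots_of_factorization {n : ℕ} {α β : RP n} {P Q : Set (Fin n)}
    (hβ : β.NoDots) (hP : P = ∅ ∨ β.IsBlock (upSet P)) (hQ : Q = ∅ ∨ β.IsBlock (dnSet Q))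
    (h : α = obarS P * β * obarS Q) : P = upDots α ∧ Q = dnDots α ∧ β = fillDots α := by
  have hrel : ∀ x y, α.rel x y ↔ β.rel x y ∧ x ∉ upSet P ∧ x ∉ dnSet Q := fun x y => by
    rw [h, obarS_mul_mul_obarS_rel hP hQ]
  have hPα : P = upDots α := by
    ext i
    simp [upDots, hrel, hβ _, inl_mem_upSet, inl_notMem_dnSet]
  have hQα : Q = dnDots α := by
    ext i
    simp [dnDots, hrel, hβ _, inr_mem_dnSet, inr_notMem_upSet]
  refine ⟨hPα, hQα, RP.ext' fun x y => ?_⟩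
  change _ ↔ α.rel x y ∨ _
  rw [← hPα, ← hQα, hrel]
  have hup : x ∈ upSet P → (β.rel x y ↔ y ∈ upSet P) := fun hx => by
    rcases hP with rfl | hP
    · simp [upSet] at hx
    · exact ⟨fun h => (hP.rel_iff hx).1 (β.symm h), fun h => (hP.rel_iff h).2 hx⟩
  have hdn : x ∈ dnSet Q → (β.rel x y ↔ y ∈ dnSet Q) := fun hx => by
    rcases hQ with rfl | hQ
    · simp [dnSet] at hx
    · exact ⟨fun h => (hQ.rel_iff hx).1 (β.symm h), fun h => (hQ.rel_iff h).2 hx⟩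
  tauto

/-- Every block of a permutation diagram joins the upper row to the lower row, so filling the
rook dots of `α` yields a permutation only when `α` has no rook dots at all. -/
theorem isPermDiag_of_fillDots {n : ℕ} {α : RP n} (h : (fillDots α).IsPermDiag) :
    α.IsPermDiag := by
  obtain ⟨σ, hσ⟩ := h
  have hP : ∀ i, i ∉ upDots α := fun i hi => by
    have hr : (fillDots α).rel (Sum.inl i) (Sum.inr (σ i)) := by
      rw [hσ]
      exact rfl
    rcases hr with h | h | h
    · exact hi (α.trans h (α.symm h))
    · exact inr_notMem_upSet h.2
    · exact inl_notMem_dnSet h.1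
  have hQ : ∀ i, i ∉ dnDots α := fun i hi => by
    have hr : (fillDots α).rel (Sum.inr i) (Sum.inl (σ.symm i)) := by
      rw [hσ]
      exact (σ.apply_symm_apply i).symm
    rcases hr with h | h | h
    · exact hi (α.trans h (α.symm h))
    · exact inr_notMem_upSet h.1
    · exact inl_notMem_dnSet h.2
  refine ⟨σ, hσ ▸ RP.ext' fun x y => ⟨Or.inl, ?_⟩⟩
  rintro (h | ⟨⟨i, hi, -⟩, -⟩ | ⟨⟨i, hi, -⟩, -⟩)
  · exact h
  · exact (hP i hi).elim
  · exact (hQ i hi).elim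

/-- normal form in `RP_n`: every `α ∈ RP_n` factors as
`α = ō_P β ō_Q` for unique (possibly empty) `P, Q ⊆ [n]` and a unique `β ∈ P_n` such
that `P` is a block of `β` or `P = ∅`, and `Q'` is a block of `β` or `Q = ∅`; moreover
if `α ∈ RP_n ∖ S_n` then `β ∈ P_n ∖ S_n`. -/
theorem stmt1 (n : ℕ) (hn : 1 ≤ n) (α : RP n) :
    ∃ (P Q : Set (Fin n)) (β : RP n),
      β.NoDots ∧
      (P = ∅ ∨ β.IsBlock (upSet P)) ∧
      (Q = ∅ ∨ β.IsBlock (dnSet Q)) ∧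
      α = obarS P * β * obarS Q ∧
      (∀ (P' Q' : Set (Fin n)) (β' : RP n),
        β'.NoDots → (P' = ∅ ∨ β'.IsBlock (upSet P')) → (Q' = ∅ ∨ β'.IsBlock (dnSet Q')) →
        α = obarS P' * β' * obarS Q' → P' = P ∧ Q' = Q ∧ β' = β) ∧
      (¬ α.IsPermDiag → ¬ β.IsPermDiag) := by
  exact ⟨upDots α, dnDots α, fillDots α, fillDots_noDots α, fillDots_upSet α,
    fillDots_dnSet α, fillDots_factorization α,
    fun _ _ _ h₁ h₂ h₃ h => eq_fillDots_of_factorization h₁ h₂ h₃ h,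
    fun hα hβ => hα (isPermDiag_of_fillDots hβ)⟩

end RookPaper
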